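/- Let B ⊆ {0,…,s−1} be nonempty with |B| = v and let t > v be an integer. Suppose λ_0, …, λ_{ns−1} are pairwise distinct and satisfy the local constraints. Then there exists an ℓt × ℓt matrix M over F_q such that: (i) M · A_{0,B}^(t) equals the block matrix with A_{0,B}^(v) on top and the ℓ(t−v) × ℓv zero matrix below; and (ii) for every a with 0 < a < n/s and every b ∈ {0,…,s−1}, M · A_{a,b}^(t) equals the block matrix with A_{a,b}^(v) on top and a matrix Â below, where Â = A_{a,b}^(t−v) · Q for some invertible ℓ × ℓ matrix Q over F_q (i.e., Â is column equivalent to A_{a,b}^(t−v)). -/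

import Mathlib

open Matrix

/-- The `u`-th digit of `i` in base `s`. -/
def digit (s i u : ℕ) : ℕ := i / s ^ u % s

open scoped Classical in
/-- The `z`-th entry of the `(i,j)` block (a length-`t` column vector, `0 ≤ z < t`) of the
block matrix `A_{a,b}^{(t)}`; the group size is `g` (`g = s` for the first construction and
`g = s + 1` for the second), so the relevant `λ`-index is `a·s·g + b·s + j_a`. -/
noncomputable def Aent {F : Type*} [Field F] (lam : ℕ → F) (s g a b i j z : ℕ) : F :=
  if i = j then lam (a * s * g + b * s + digit s j a) ^ z
  else if digit s i a = b ∧ digit s j a ≠ b ∧ (∀ u, u ≠ a → digit s i u = digit s j u) then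
    -(lam (a * s * g + b * s + digit s j a) ^ z)
  else 0

/-- `A_{a,b}^{(t)}` as an `ℓt × ℓ` matrix; row `ρ` encodes block row `ρ / t` and
inner row `ρ % t`. -/
noncomputable def Amat {F : Type*} [Field F] (lam : ℕ → F) (s g ℓ a b t : ℕ) :
    Matrix (Fin (ℓ * t)) (Fin ℓ) F :=
  Matrix.of fun ρ j => Aent lam s g a b ((ρ : ℕ) / t) (j : ℕ) ((ρ : ℕ) % t)

/-- The `m`-th smallest element of the finite set `B ⊆ ℕ` (junk value `0` if `m ≥ |B|`). -/
def enum (B : Finset ℕ) (m : ℕ) : ℕ := (B.sort (· ≤ ·)).getD m 0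

/-- `A_{a,B}^{(t)} = [A_{a,b₁}^{(t)} | ⋯ | A_{a,b_v}^{(t)}]` as an `ℓt × ℓ|B|` matrix:
row `ρ` encodes block row `ρ / t` and inner row `ρ % t`; column `κ` selects the
`κ / ℓ`-th member of `B` and inner column `κ % ℓ`. -/
noncomputable def AmatB {F : Type*} [Field F] (lam : ℕ → F) (s g ℓ a t : ℕ) (B : Finset ℕ) :
    Matrix (Fin (ℓ * t)) (Fin (ℓ * B.card)) F :=
  Matrix.of fun ρ κ =>
    Aent lam s g a (enum B ((κ : ℕ) / ℓ)) ((ρ : ℕ) / t) ((κ : ℕ) % ℓ) ((ρ : ℕ) % t)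

/-- The local (in-group) constraints: every square matrix `A_{a,B}` (for a group index
`a < groups` and a nonempty `B ⊆ {0, …, g-1}`) is invertible. -/
def LocalConstraints {F : Type*} [Field F] (lam : ℕ → F) (s g ℓ groups : ℕ) : Prop :=
  ∀ a < groups, ∀ B ⊆ Finset.range g, B.Nonempty → (AmatB lam s g ℓ a B.card B).det ≠ 0

open Polynomial in
/-- Local lemma: existence of the monic polynomial matrix. -/
theorem local_exists {F : Type*} [Field F] (s v : ℕ) (ι : Type*) [Fintype ι]
    (hcard : Fintype.card ι = s * v) (κ : ι → ℕ → F) (pt : ι → F)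
    (hinj : ∀ f : ℕ → F[X], (∀ i < s, (f i).degree < v) →
      (∀ c, ∑ i ∈ Finset.range s, κ c i * (f i).eval (pt c) = 0) → ∀ i < s, f i = 0) :
    ∃ g : ℕ → ℕ → F[X], (∀ m < s, ∀ j < s, (g m j).degree < (v + 1 : ℕ)) ∧
      (∀ m < s, ∀ c, ∑ i ∈ Finset.range s, κ c i * (g m i).eval (pt c) = 0) ∧
      (∀ μ : F, (∀ c, pt c ≠ μ) → ∀ w : ℕ → F,
        (∀ j < s, ∑ m ∈ Finset.range s, w m * (g m j).eval μ = 0) → ∀ m < s, w m = 0) := by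
  classical
  let T : (Fin s → degreeLT F v) →ₗ[F] (ι → F) :=
    { toFun := fun f c => ∑ i : Fin s, κ c i * ((f i : F[X])).eval (pt c)
      map_add' := by
        intro f h
        funext c
        simp [mul_add, Finset.sum_add_distrib]
      map_smul' := by
        intro r f
        funext c
        simp only [Pi.smul_apply, Submodule.coe_smul, eval_smul, smul_eq_mul, RingHom.id_apply,
          Finset.mul_sum]
        exact Finset.sum_congr rfl fun i _ => by ring }
  have hTinj : Function.Injective T := by
    rw [injective_iff_map_eq_zero]
    intro f hf
    have := hinj (fun i => if h : i < s then (f ⟨i, h⟩ : F[X]) else 0) (by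
      intro i hi
      simp only [hi, dif_pos]
      exact mem_degreeLT.1 (f ⟨i, hi⟩).2) (by
      intro c
      have := congrFun hf c
      rw [Finset.sum_range]
      simpa [T] using this)
    funext i
    have h2 := this i i.2
    simp only [i.2, dif_pos] at h2
    exact Subtype.ext h2
  have hTsurj : Function.Surjective T := by
    have hfin : Module.Finite F (degreeLT F v) := Module.Finite.equiv (degreeLTEquiv F v).symm
    refine (LinearMap.injective_iff_surjective_of_finrank_eq_finrank ?_).1 hTinj
    rw [Module.finrank_pi_fintype, Module.finrank_fintype_fun_eq_card, hcard,
      (degreeLTEquiv F v).finrank_eq]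
    simp
  choose R hR using fun m : ℕ => hTsurj (fun c => κ c m * pt c ^ v)
  let r : ℕ → ℕ → F[X] := fun m j => if h : j < s then (R m ⟨j, h⟩ : F[X]) else 0
  have hrdeg : ∀ m j, (r m j).degree < v := by
    intro m j
    by_cases h : j < s
    · simp only [r, h, dif_pos]
      exact mem_degreeLT.1 (R m ⟨j, h⟩).2
    · simp only [r, h, dif_neg, not_false_eq_true, degree_zero]
      exact WithBot.bot_lt_coe _
  have hr : ∀ m c, ∑ i ∈ Finset.range s, κ c i * (r m i).eval (pt c) = κ c m * pt c ^ v := by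
    intro m c
    rw [← congrFun (hR m) c, Finset.sum_range]
    simp [T, r]
  let g : ℕ → ℕ → F[X] := fun m j => (if m = j then X ^ v else 0) - r m j
  have hg : ∀ m < s, ∀ c, ∑ i ∈ Finset.range s, κ c i * (g m i).eval (pt c) = 0 := by
    intro m hm c
    simp only [g, eval_sub, mul_sub, Finset.sum_sub_distrib, hr]
    rw [sub_eq_zero, Finset.sum_eq_single m]
    · simp
    · intro b _ hb
      simp [hb.symm]
    · simp [hm]
  have hlt : ((v : ℕ) : WithBot ℕ) < ((v + 1 : ℕ) : WithBot ℕ) := by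
    exact_mod_cast Nat.lt_succ_self v
  refine ⟨g, ?_, hg, ?_⟩
  · intro m _ j _
    refine lt_of_le_of_lt (degree_sub_le _ _) (max_lt ?_ ((hrdeg m j).trans hlt))
    split_ifs
    · rw [degree_X_pow]; exact hlt
    · simp only [degree_zero]; exact WithBot.bot_lt_coe _
  · intro μ hμ w hw
    let f : ℕ → F[X] := fun j => ∑ m ∈ Finset.range s, C (w m) * g m j
    have hfeq : ∀ j < s, f j = C (w j) * X ^ v - ∑ m ∈ Finset.range s, C (w m) * r m j := by
      intro j hj
      simp only [f, g, mul_sub, Finset.sum_sub_distrib]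
      congr 1
      rw [Finset.sum_eq_single j]
      · simp
      · intro b _ hb
        simp [hb]
      · simp [hj]
    have hsumdeg : ∀ j, (∑ m ∈ Finset.range s, C (w m) * r m j).degree < v := by
      intro j
      apply mem_degreeLT.1
      refine Submodule.sum_mem _ fun m _ => ?_
      rw [← smul_eq_C_mul]
      exact Submodule.smul_mem _ _ (mem_degreeLT.2 (hrdeg m j))
    have hfroot : ∀ j < s, (f j).IsRoot μ := by
      intro j hj
      simp only [f, IsRoot.def, eval_finsetSum, eval_mul, eval_C]
      exact hw j hj
    have hfdeg : ∀ j < s, (f j).degree < (v + 1 : ℕ) := by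
      intro j hj
      rw [hfeq j hj]
      refine lt_of_le_of_lt (degree_sub_le _ _) (max_lt ?_ ((hsumdeg j).trans hlt))
      exact lt_of_le_of_lt (degree_C_mul_X_pow_le v _) hlt
    have hfk : ∀ c, ∑ i ∈ Finset.range s, κ c i * (f i).eval (pt c) = 0 := by
      intro c
      simp only [f, eval_finsetSum, eval_mul, eval_C, Finset.mul_sum]
      rw [Finset.sum_comm]
      refine Finset.sum_eq_zero fun m hm => ?_
      have := hg m (Finset.mem_range.1 hm) c
      calc _ = w m * ∑ i ∈ Finset.range s, κ c i * (g m i).eval (pt c) := by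
            rw [Finset.mul_sum]
            exact Finset.sum_congr rfl fun i _ => by ring
        _ = 0 := by rw [this, mul_zero]
    let h : ℕ → F[X] := fun j => f j /ₘ (X - C μ)
    have hmul : ∀ j < s, (X - C μ) * h j = f j := fun j hj =>
      mul_divByMonic_eq_iff_isRoot.2 (hfroot j hj)
    have h0 := hinj h (by
      intro j hj
      by_cases hz : h j = 0
      · rw [hz, degree_zero]; exact WithBot.bot_lt_coe _
      have h1 := hfdeg j hj
      rw [← hmul j hj, degree_mul, degree_X_sub_C, degree_eq_natDegree hz] at h1
      rw [degree_eq_natDegree hz]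
      have h2 : 1 + (h j).natDegree < v + 1 := by exact_mod_cast h1
      have : (h j).natDegree < v := by omega
      exact_mod_cast this) (by
      intro c
      have h1 := hfk c
      have h2 : (pt c - μ) * ∑ i ∈ Finset.range s, κ c i * (h i).eval (pt c) = 0 := by
        rw [← h1, Finset.mul_sum]
        refine Finset.sum_congr rfl fun i hi => ?_
        rw [← hmul i (Finset.mem_range.1 hi)]
        simp only [eval_mul, eval_sub, eval_X, eval_C]
        ring
      exact (mul_eq_zero.1 h2).resolve_left (sub_ne_zero.2 (hμ c)))
    intro m hm
    have hf0 : f m = 0 := by rw [← hmul m hm, h0 m hm, mul_zero]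
    rw [hfeq m hm] at hf0
    have h3 := congrArg (fun p => coeff p v) hf0
    simpa [coeff_eq_zero_of_degree_lt (hsumdeg m)] using h3

theorem sum_divmod {F : Type*} [AddCommMonoid F] (L t : ℕ) (f : ℕ → ℕ → F) :
    ∑ ρ : Fin (L * t), f ((ρ : ℕ) / t) ((ρ : ℕ) % t) =
      ∑ i ∈ Finset.range L, ∑ z ∈ Finset.range t, f i z := by
  rw [Finset.sum_range]
  simp only [Finset.sum_range]
  rw [← Fintype.sum_prod_type' (f := fun (i : Fin L) (z : Fin t) => f i z)]
  exact Fintype.sum_equiv finProdFinEquiv.symm _ _ fun x => by simp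

theorem sum_range_divmod {F : Type*} [AddCommMonoid F] (L t : ℕ) (f : ℕ → ℕ → F) :
    ∑ ρ ∈ Finset.range (L * t), f (ρ / t) (ρ % t) =
      ∑ i ∈ Finset.range L, ∑ z ∈ Finset.range t, f i z := by
  rw [← sum_divmod, Finset.sum_range]

theorem digit_zero (s i : ℕ) : digit s i 0 = i % s := by simp [digit]

theorem digit_succ (s i u : ℕ) : digit s i (u + 1) = digit s (i / s) u := by
  simp [digit, Nat.div_div_eq_div_mul, pow_succ']

theorem eq_of_digits (s : ℕ) (hs : 2 ≤ s) (i : ℕ) :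
    ∀ j, (∀ u, digit s i u = digit s j u) → i = j := by
  induction i using Nat.strong_induction_on with
  | _ i ih =>
    intro j h
    have h0 := h 0
    rw [digit_zero, digit_zero] at h0
    have hsucc : ∀ u, digit s (i / s) u = digit s (j / s) u := fun u => by
      rw [← digit_succ, ← digit_succ]; exact h _
    have hi := Nat.div_add_mod i s
    have hj := Nat.div_add_mod j s
    by_cases hz : i = 0
    · subst hz
      by_contra hne
      -- all digits of j vanish
      have hall : ∀ m, m ≠ 0 → ¬ ∀ u, digit s m u = 0 := by
        intro m
        induction m using Nat.strong_induction_on with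
        | _ m ihm =>
          intro hm hd
          have hm0 := hd 0
          rw [digit_zero] at hm0
          have hmm := Nat.div_add_mod m s
          refine ihm (m / s) (Nat.div_lt_self (by omega) hs) ?_ fun u => by
            rw [← digit_succ]; exact hd _
          intro h
          rw [h, hm0] at hmm
          simp at hmm
          exact hm hmm.symm
      exact hall j (Ne.symm hne) fun u => by rw [← h u]; simp [digit]
    · have := ih (i / s) (Nat.div_lt_self (by omega) hs) (j / s) hsucc
      rw [← hi, ← hj, this, h0]

open scoped Classical in
/-- sign coefficient of `Aent`. -/
noncomputable def Cof (F : Type*) [Field F] (s a b i j : ℕ) : F :=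
  if i = j then 1
  else if digit s i a = b ∧ digit s j a ≠ b ∧ (∀ u, u ≠ a → digit s i u = digit s j u) then
    -1
  else 0

theorem Aent_eq {F : Type*} [Field F] (lam : ℕ → F) (s g a b i j z : ℕ) :
    Aent lam s g a b i j z = Cof F s a b i j * lam (a * s * g + b * s + digit s j a) ^ z := by
  unfold Aent Cof
  split_ifs <;> simp

theorem div_mod_ext {s i j : ℕ} (h1 : i / s = j / s) (h2 : i % s = j % s) : i = j := by
  rw [← Nat.div_add_mod i s, ← Nat.div_add_mod j s, h1, h2]

/-- local sign coefficient. -/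
noncomputable def kof (F : Type*) [Field F] (b i j : ℕ) : F :=
  if i = j then 1 else if i = b ∧ j ≠ b then -1 else 0

theorem Cof_zero (F : Type*) [Field F] (s : ℕ) (hs : 2 ≤ s) (b i j : ℕ) :
    Cof F s 0 b i j = if i / s = j / s then kof F b (i % s) (j % s) else 0 := by
  have key : (∀ u, u ≠ 0 → digit s i u = digit s j u) ↔ i / s = j / s := by
    constructor
    · intro h
      refine eq_of_digits s hs _ _ fun u => ?_
      rw [← digit_succ, ← digit_succ]; exact h _ (Nat.succ_ne_zero u)
    · intro h u hu
      obtain ⟨u, rfl⟩ := Nat.exists_eq_succ_of_ne_zero hu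
      rw [Nat.succ_eq_add_one, digit_succ, digit_succ, h]
  unfold Cof kof
  rw [key, digit_zero, digit_zero]
  by_cases h1 : i / s = j / s
  · by_cases h2 : i % s = j % s
    · have := div_mod_ext h1 h2
      simp [this]
    · have : i ≠ j := fun h => h2 (by rw [h])
      simp [h1, h2, this]
  · have : i ≠ j := fun h => h1 (by rw [h])
    simp [h1, this]

theorem Cof_succ (F : Type*) [Field F] (s a b i j : ℕ) :
    Cof F s (a + 1) b i j = if i % s = j % s then Cof F s a b (i / s) (j / s) else 0 := by
  have key : (∀ u, u ≠ a + 1 → digit s i u = digit s j u) ↔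
      i % s = j % s ∧ ∀ u, u ≠ a → digit s (i / s) u = digit s (j / s) u := by
    constructor
    · intro h
      refine ⟨by simpa [digit_zero] using h 0 (by omega), fun u hu => ?_⟩
      rw [← digit_succ, ← digit_succ]; exact h _ (by omega)
    · rintro ⟨h0, h⟩ u hu
      rcases u with _ | u
      · rwa [digit_zero, digit_zero]
      · rw [digit_succ, digit_succ]; exact h _ (by omega)
  unfold Cof
  rw [key, digit_succ, digit_succ]
  by_cases h2 : i % s = j % s
  · by_cases h1 : i / s = j / s
    · have := div_mod_ext h1 h2
      simp [this]
    · have : i ≠ j := fun h => h1 (by rw [h])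
      rw [if_neg this, if_pos h2, if_neg h1]
      split_ifs with p q q
      · rfl
      · exact absurd ⟨p.1, p.2.1, p.2.2.2⟩ q
      · exact absurd ⟨q.1, q.2.1, h2, q.2.2⟩ p
      · rfl
  · have : i ≠ j := fun h => h2 (by rw [h])
    simp [h2, this]

open Polynomial in
theorem sum_poly {F : Type*} [Field F] (lam : ℕ → F) (s g ℓ a b t j : ℕ) (P : ℕ → F[X])
    (hP : ∀ i < ℓ, (P i).degree < t) :
    ∑ ρ : Fin (ℓ * t), (P ((ρ : ℕ) / t)).coeff ((ρ : ℕ) % t) *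
        Aent lam s g a b ((ρ : ℕ) / t) j ((ρ : ℕ) % t) =
      ∑ i ∈ Finset.range ℓ, Cof F s a b i j *
        (P i).eval (lam (a * s * g + b * s + digit s j a)) := by
  rw [sum_divmod ℓ t fun i z => (P i).coeff z * Aent lam s g a b i j z]
  refine Finset.sum_congr rfl fun i hi => ?_
  have hd := hP i (Finset.mem_range.1 hi)
  rcases Nat.eq_zero_or_pos t with rfl | ht
  · have : P i = 0 := by
      by_contra h
      rw [degree_eq_natDegree h] at hd
      exact absurd hd (by simp)
    simp [this]
  have hn : (P i).natDegree < t := by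
    by_cases h : P i = 0
    · simpa [h] using ht
    · exact (natDegree_lt_iff_degree_lt h).2 hd
  rw [eval_eq_sum_range' hn, Finset.mul_sum]
  refine Finset.sum_congr rfl fun z _ => ?_
  rw [Aent_eq]; ring

theorem enum_mem (B : Finset ℕ) (m : ℕ) (hm : m < B.card) : enum B m ∈ B := by
  have h : m < (B.sort (· ≤ ·)).length := by rwa [Finset.length_sort]
  unfold enum
  rw [List.getD_eq_getElem _ _ h]
  exact (Finset.mem_sort (· ≤ ·)).1 (List.getElem_mem h)

theorem sum_block {F : Type*} [Field F] (L s J : ℕ) (hJ : J < L) (f : ℕ → F) :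
    ∑ i ∈ Finset.range (L * s), (if i / s = J then f (i % s) else 0) =
      ∑ i ∈ Finset.range s, f i := by
  rw [sum_range_divmod L s fun I i => if I = J then f i else 0, Finset.sum_eq_single J]
  · simp
  · intro b _ hb; simp [hb]
  · simp [hJ]

/-- Lemma 6 of the paper: for nonempty `B ⊆ [s]` with `|B| = v < t`,
under the local constraints there is an `ℓt × ℓt` matrix `M` such that
(i) `M · A_{0,B}^{(t)}` is `A_{0,B}^{(v)}` stacked over a zero matrix, and
(ii) for all `0 < a < n/s` and `b ∈ [s]`, `M · A_{a,b}^{(t)}` is `A_{a,b}^{(v)}` stacked over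
a matrix `Â = A_{a,b}^{(t−v)} · Q` with `Q` invertible (so `Â` is column equivalent to
`A_{a,b}^{(t−v)}`). -/
theorem statement7 (F : Type*) [Field F] [Fintype F] (n k d s ℓ : ℕ)
    (hk : 1 ≤ k) (hkn : k < n) (hd₁ : k + 1 ≤ d) (hd₂ : d ≤ n - 1)
    (hs : s = d - k + 1) (hdiv : s ∣ n) (hℓ : ℓ = s ^ (n / s))
    (lam : ℕ → F)
    (hdist : ∀ i < n * s, ∀ j < n * s, lam i = lam j → i = j)
    (hloc : LocalConstraints lam s s ℓ (n / s))
    (B : Finset ℕ) (hBsub : B ⊆ Finset.range s) (hBne : B.Nonempty)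
    (t : ℕ) (ht : B.card < t) :
    ∃ M : Matrix (Fin (ℓ * t)) (Fin (ℓ * t)) F,
      (∀ (ρ : Fin (ℓ * t)) (κ : Fin (ℓ * B.card)),
        (M * AmatB lam s s ℓ 0 t B) ρ κ =
          if (ρ : ℕ) < ℓ * B.card then
            Aent lam s s 0 (enum B ((κ : ℕ) / ℓ)) ((ρ : ℕ) / B.card) ((κ : ℕ) % ℓ)
              ((ρ : ℕ) % B.card)
          else 0) ∧
      (∀ a, 0 < a → a < n / s → ∀ b < s,
        ∃ Q : Matrix (Fin ℓ) (Fin ℓ) F, IsUnit Q ∧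
          ∃ Abot : ℕ → ℕ → F,
            (Matrix.of (fun (p : Fin (ℓ * (t - B.card))) (j : Fin ℓ) =>
                Abot (p : ℕ) (j : ℕ)) = Amat lam s s ℓ a b (t - B.card) * Q) ∧
            ∀ (ρ : Fin (ℓ * t)) (j : Fin ℓ),
              (M * Amat lam s s ℓ a b t) ρ j =
                if (ρ : ℕ) < ℓ * B.card then
                  Aent lam s s a b ((ρ : ℕ) / B.card) (j : ℕ) ((ρ : ℕ) % B.card)
                else Abot ((ρ : ℕ) - ℓ * B.card) (j : ℕ)) := by
  classical
  have hs2 : 2 ≤ s := by omega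
  have hs0 : 0 < s := by omega
  have hn0 : 0 < n := by omega
  have hns : 0 < n / s := Nat.div_pos (Nat.le_of_dvd hn0 hdiv) hs0
  obtain ⟨N, hN⟩ : ∃ N, n / s = N + 1 := ⟨n / s - 1, by omega⟩
  obtain ⟨L, hL⟩ : ∃ L, L = s ^ N := ⟨_, rfl⟩
  have hℓL : ℓ = L * s := by rw [hℓ, hN, pow_succ, hL]
  have hL0 : 0 < L := by rw [hL]; positivity
  have hℓ0 : 0 < ℓ := by rw [hℓL]; positivity
  obtain ⟨v, hv⟩ : ∃ v, v = B.card := ⟨_, rfl⟩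
  have hv0 : 0 < v := by rw [hv]; exact Finset.card_pos.2 hBne
  have hdivlt : ∀ j < ℓ, j / s < L := fun j hj => by
    rw [hℓL] at hj
    exact Nat.div_lt_of_lt_mul (by rwa [mul_comm] at hj)
  -- sum over a block for group 0
  have hsum0 : ∀ (b j : ℕ) (f : ℕ → F), j < ℓ →
      ∑ i ∈ Finset.range ℓ, Cof F s 0 b i j * (if i / s = j / s then f (i % s) else 0) =
        ∑ i ∈ Finset.range s, kof F b i (j % s) * f i := by
    intro b j f hj
    rw [hℓL, ← sum_block L s (j / s) (hdivlt j hj)]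
    refine Finset.sum_congr rfl fun i _ => ?_
    rw [Cof_zero F s hs2]
    split_ifs <;> simp
  have hsum0' : ∀ (b j : ℕ) (f : ℕ → F), j < ℓ →
      ∑ i ∈ Finset.range ℓ, Cof F s 0 b i j * f (i % s) =
        ∑ i ∈ Finset.range s, kof F b i (j % s) * f i := by
    intro b j f hj
    rw [hℓL, ← sum_block L s (j / s) (hdivlt j hj)]
    refine Finset.sum_congr rfl fun i _ => ?_
    rw [Cof_zero F s hs2]
    split_ifs <;> simp
  obtain ⟨g, hgdeg, hgker, hginv⟩ := local_exists (F := F) s v (B × Fin s)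
    (by simp [hv, mul_comm]) (fun c i => kof F c.1 i c.2) (fun c => lam (c.1 * s + c.2)) (by
      intro f hf hker
      have hdet := hloc 0 hns B hBsub hBne
      have hw := Matrix.eq_zero_of_vecMul_eq_zero hdet
        (v := fun ρ => (f ((ρ : ℕ) / B.card % s)).coeff ((ρ : ℕ) % B.card)) (by
          funext κ
          simp only [Matrix.vecMul, dotProduct, AmatB, Matrix.of_apply, Pi.zero_apply]
          rw [sum_poly lam s s ℓ 0 _ B.card _ (fun i => f (i % s))
            (fun i _ => by rw [← hv]; exact hf _ (Nat.mod_lt _ hs0))]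
          have hκ : (κ : ℕ) / ℓ < B.card := Nat.div_lt_of_lt_mul κ.2
          have hj : (κ : ℕ) % ℓ < ℓ := Nat.mod_lt _ hℓ0
          rw [hsum0' _ _ (fun i => (f i).eval _) hj, digit_zero]
          have := hker (⟨_, enum_mem B _ hκ⟩, ⟨(κ : ℕ) % ℓ % s, Nat.mod_lt _ hs0⟩)
          simpa using this)
      intro i hi
      ext z
      rw [Polynomial.coeff_zero]
      by_cases hz : z < v
      · have hlt : i * B.card + z < ℓ * B.card := by
          have : i < ℓ := by
            rw [hℓL]; exact lt_of_lt_of_le hi (Nat.le_mul_of_pos_left _ hL0)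
          rw [← hv]
          calc i * v + z < (i + 1) * v := by rw [add_mul, one_mul]; omega
            _ ≤ ℓ * v := Nat.mul_le_mul_right _ this
        have h1 := congrFun hw ⟨i * B.card + z, hlt⟩
        simp only [Pi.zero_apply, ← hv] at h1
        have e1 : (i * v + z) / v = i := by
          rw [mul_comm, Nat.mul_add_div hv0, Nat.div_eq_of_lt hz, add_zero]
        have e2 : (i * v + z) % v = z := by
          rw [mul_comm, Nat.mul_add_mod, Nat.mod_eq_of_lt hz]
        rwa [e1, e2, Nat.mod_eq_of_lt hi] at h1
      · refine Polynomial.coeff_eq_zero_of_degree_lt (lt_of_lt_of_le (hf i hi) ?_)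
        exact_mod_cast not_lt.1 hz)
  have hker' : ∀ m < s, ∀ b ∈ B, ∀ j < s, ∑ i ∈ Finset.range s,
      kof F b i j * (g m i).eval (lam (b * s + j)) = 0 := by
    intro m hm b hb j hj
    simpa using hgker m hm (⟨b, hb⟩, ⟨j, hj⟩)
  subst hv
  obtain ⟨r, hr⟩ : ∃ r, r = t - B.card := ⟨_, rfl⟩
  have hr0 : 0 < r := by omega
  rw [← hr]
  let P : ℕ → ℕ → Polynomial F := fun ρ i =>
    if ρ < ℓ * B.card then (if i = ρ / B.card then Polynomial.X ^ (ρ % B.card) else 0)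
    else if i / s = (ρ - ℓ * B.card) / r / s then
      Polynomial.X ^ ((ρ - ℓ * B.card) % r) * g ((ρ - ℓ * B.card) / r % s) (i % s) else 0
  have hbot : (⊥ : WithBot ℕ) < (t : WithBot ℕ) := WithBot.bot_lt_coe _
  have hPdeg : ∀ ρ i, (P ρ i).degree < t := by
    intro ρ i
    simp only [P]
    split_ifs
    · rw [Polynomial.degree_X_pow]
      have : ρ % B.card < t := (Nat.mod_lt _ hv0).trans ht
      exact_mod_cast this
    · rw [Polynomial.degree_zero]; exact hbot
    · have h1 := hgdeg ((ρ - ℓ * B.card) / r % s) (Nat.mod_lt _ hs0) (i % s) (Nat.mod_lt _ hs0)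
      have h2 := Nat.mod_lt (ρ - ℓ * B.card) hr0
      by_cases hz : g ((ρ - ℓ * B.card) / r % s) (i % s) = 0
      · rw [hz, mul_zero, Polynomial.degree_zero]; exact hbot
      · rw [Polynomial.degree_eq_natDegree hz] at h1
        rw [Polynomial.degree_mul, Polynomial.degree_X_pow, Polynomial.degree_eq_natDegree hz]
        have h3 : (g ((ρ - ℓ * B.card) / r % s) (i % s)).natDegree < B.card + 1 := by exact_mod_cast h1
        have h4 : (ρ - ℓ * B.card) % r + (g ((ρ - ℓ * B.card) / r % s) (i % s)).natDegree < t := by omega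
        exact_mod_cast h4
    · rw [Polynomial.degree_zero]; exact hbot
  have htop : ∀ (ρ : ℕ) (a b j : ℕ), ρ < ℓ * B.card →
      ∑ i ∈ Finset.range ℓ, Cof F s a b i j *
        (P ρ i).eval (lam (a * s * s + b * s + digit s j a)) =
      Aent lam s s a b (ρ / B.card) j (ρ % B.card) := by
    intro ρ a b j hρ
    have hlt : ρ / B.card < ℓ := Nat.div_lt_of_lt_mul (by rwa [mul_comm] at hρ)
    rw [Finset.sum_eq_single (ρ / B.card)]
    · simp [P, hρ, Aent_eq]
    · intro i _ hi
      simp [P, hρ, hi]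
    · simp [hlt]
  have hprow : ∀ ρ : ℕ, ρ < ℓ * t → ¬ ρ < ℓ * B.card → (ρ - ℓ * B.card) / r < ℓ := by
    intro ρ h1 h2
    apply Nat.div_lt_of_lt_mul
    have : r * ℓ + ℓ * B.card = ℓ * t := by
      rw [mul_comm r, ← mul_add]; congr 1; omega
    omega
  refine ⟨Matrix.of fun ρ σ => (P ρ ((σ : ℕ) / t)).coeff ((σ : ℕ) % t), ?_, ?_⟩
  · intro ρ κ
    have hκ : (κ : ℕ) / ℓ < B.card := Nat.div_lt_of_lt_mul κ.2
    have hj : (κ : ℕ) % ℓ < ℓ := Nat.mod_lt _ hℓ0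
    rw [Matrix.mul_apply]
    simp only [AmatB, Matrix.of_apply]
    rw [sum_poly lam s s ℓ 0 _ t _ (P ρ) (fun i _ => hPdeg ρ i)]
    split_ifs with hρ
    · exact htop _ _ _ _ hρ
    · simp only [P, hρ, if_false]
      by_cases hJ : ((ρ : ℕ) - ℓ * B.card) / r / s = (κ : ℕ) % ℓ / s
      · rw [hJ]
        have := hsum0 (enum B ((κ : ℕ) / ℓ)) ((κ : ℕ) % ℓ)
          (fun i => (Polynomial.X ^ (((ρ : ℕ) - ℓ * B.card) % r) *
            g (((ρ : ℕ) - ℓ * B.card) / r % s) i).eval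
              (lam (0 * s * s + enum B ((κ : ℕ) / ℓ) * s + digit s ((κ : ℕ) % ℓ) 0))) hj
        simp only [apply_ite (Polynomial.eval _), Polynomial.eval_zero]
        rw [this]
        have h2 := hker' (((ρ : ℕ) - ℓ * B.card) / r % s) (Nat.mod_lt _ hs0) _ (enum_mem B _ hκ)
          ((κ : ℕ) % ℓ % s) (Nat.mod_lt _ hs0)
        have h3 := congrArg (fun x => lam (enum B ((κ : ℕ) / ℓ) * s + (κ : ℕ) % ℓ % s) ^
          (((ρ : ℕ) - ℓ * B.card) % r) * x) h2
        simp only [mul_zero, Finset.mul_sum] at h3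
        rw [← h3]
        refine Finset.sum_congr rfl fun i _ => ?_
        simp only [digit_zero, Polynomial.eval_mul, Polynomial.eval_pow, Polynomial.eval_X,
          zero_mul, zero_add]
        ring
      · refine Finset.sum_eq_zero fun i _ => ?_
        rw [Cof_zero F s hs2]
        by_cases h : i / s = (κ : ℕ) % ℓ / s
        · rw [if_neg (show ¬ i / s = ((ρ : ℕ) - ℓ * B.card) / r / s from
            fun h' => hJ (h'.symm.trans h))]
          simp
        · simp [h]
  · intro a ha han b hb
    obtain ⟨a, rfl⟩ := Nat.exists_eq_succ_of_ne_zero ha.ne'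
    rw [Nat.succ_eq_add_one] at *
    obtain ⟨mu, hmu⟩ : ∃ mu : ℕ → F, mu = fun J => lam ((a + 1) * s * s + b * s + digit s J a) :=
      ⟨_, rfl⟩
    have hmu' : ∀ j, lam ((a + 1) * s * s + b * s + digit s j (a + 1)) = mu (j / s) := by
      intro j; rw [hmu, digit_succ]
    have hmune : ∀ J, ∀ c : B × Fin s, lam ((c.1 : ℕ) * s + c.2) ≠ mu J := by
      intro J c h
      rw [hmu] at h
      have hc1 : (c.1 : ℕ) < s := Finset.mem_range.1 (hBsub c.1.2)
      have hc2 := c.2.2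
      have hdg : digit s J a < s := Nat.mod_lt _ hs0
      have e1 : (c.1 : ℕ) * s + c.2 < s * s := by nlinarith
      have e2 : b * s + digit s J a < s * s := by nlinarith
      have e3 : s * s ≤ (a + 1) * s * s := by nlinarith [Nat.zero_le (a * s * s)]
      have e4 : (a + 1) * s * s + s * s ≤ n * s := by
        have h5 : (a + 1 + 1) * s ≤ n := by
          calc (a + 1 + 1) * s ≤ n / s * s := Nat.mul_le_mul_right _ han
            _ ≤ n := Nat.div_mul_le_self n s
        calc (a + 1) * s * s + s * s = (a + 1 + 1) * s * s := by ring
          _ ≤ n * s := Nat.mul_le_mul_right _ h5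
      have := hdist _ (by omega) _ (by omega) h
      omega
    let Qn : ℕ → ℕ → F := fun m j =>
      if m / s = j / s then (g (m % s) (j % s)).eval (mu (j / s)) else 0
    refine ⟨Matrix.of fun m j => Qn m j, ?_, fun p j => ∑ m ∈ Finset.range ℓ,
      Aent lam s s (a + 1) b (p / r) m (p % r) * Qn m j, ?_, ?_⟩
    · rw [Matrix.isUnit_iff_isUnit_det, isUnit_iff_ne_zero]
      intro hdet
      obtain ⟨w, hw0, hw⟩ := Matrix.exists_vecMul_eq_zero_iff.2 hdet
      apply hw0
      funext m0
      let w' : ℕ → F := fun m => if h : m < ℓ then w ⟨m, h⟩ else 0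
      have hblock : ∀ J < L, ∀ m < s, m + s * J < ℓ := by
        intro J hJ m hm
        rw [hℓL]
        calc m + s * J < (J + 1) * s := by rw [add_mul, one_mul, mul_comm J]; omega
          _ ≤ L * s := Nat.mul_le_mul_right _ hJ
      have hdm : ∀ J, ∀ m < s, (m + s * J) / s = J ∧ (m + s * J) % s = m := by
        intro J m hm
        constructor
        · rw [Nat.add_mul_div_left _ _ hs0, Nat.div_eq_of_lt hm, zero_add]
        · rw [Nat.add_mul_mod_self_left, Nat.mod_eq_of_lt hm]
      have hJ := hdivlt m0 m0.2
      have := hginv (mu ((m0 : ℕ) / s)) (hmune _) (fun m => w' (m + s * ((m0 : ℕ) / s))) (by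
        intro j hj
        have h1 := congrFun hw ⟨j + s * ((m0 : ℕ) / s), hblock _ hJ j hj⟩
        simp only [Matrix.vecMul, dotProduct, Matrix.of_apply, Pi.zero_apply] at h1
        rw [← h1, ← sum_block L s ((m0 : ℕ) / s) hJ, ← hℓL, Finset.sum_range]
        refine Finset.sum_congr rfl fun i _ => ?_
        simp only [Qn, (hdm _ j hj).1, (hdm _ j hj).2]
        split_ifs with h
        · rw [← h, Nat.mod_add_div]
          simp [w']
        · simp) ((m0 : ℕ) % s) (Nat.mod_lt _ hs0)
      simpa [Nat.mod_add_div, w'] using this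
    · ext p j
      simp only [Matrix.mul_apply, Amat, Matrix.of_apply, Finset.sum_range]
    · intro ρ j
      rw [Matrix.mul_apply]
      simp only [Amat, Matrix.of_apply]
      rw [sum_poly lam s s ℓ (a + 1) _ t _ (P ρ) (fun i _ => hPdeg ρ i)]
      split_ifs with hρ
      · exact htop _ _ _ _ hρ
      · have hp := hprow ρ ρ.2 hρ
        simp only [P, hρ, if_false, Aent_eq, hmu']
        generalize ((ρ : ℕ) - ℓ * B.card) / r = i' at *
        generalize ((ρ : ℕ) - ℓ * B.card) % r = z
        have hL1 := sum_block L s (i' / s) (hdivlt _ hp) (fun i => if i = (j : ℕ) % s then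
          Cof F s a b (i' / s) ((j : ℕ) / s) * (mu ((j : ℕ) / s) ^ z *
            (g (i' % s) i).eval (mu ((j : ℕ) / s))) else 0)
        have hR1 := sum_block L s ((j : ℕ) / s) (hdivlt _ j.2) (fun m => if m = i' % s then
          Cof F s a b (i' / s) ((j : ℕ) / s) * (mu ((j : ℕ) / s) ^ z *
            (g m ((j : ℕ) % s)).eval (mu ((j : ℕ) / s))) else 0)
        rw [← hℓL] at hL1 hR1
        have hms : ∀ x, x % s < s := fun x => Nat.mod_lt _ hs0
        trans Cof F s a b (i' / s) ((j : ℕ) / s) * (mu ((j : ℕ) / s) ^ z *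
            (g (i' % s) ((j : ℕ) % s)).eval (mu ((j : ℕ) / s)))
        · rw [Finset.sum_ite_eq' , if_pos (Finset.mem_range.2 (hms _))] at hL1
          rw [← hL1]
          refine Finset.sum_congr rfl fun i _ => ?_
          rw [Cof_succ]
          by_cases h1 : i / s = i' / s <;> by_cases h2 : i % s = (j : ℕ) % s <;> simp [h1, h2]
        · rw [Finset.sum_ite_eq' , if_pos (Finset.mem_range.2 (hms _))] at hR1
          rw [← hR1]
          refine Finset.sum_congr rfl fun m _ => ?_
          rw [Cof_succ]
          simp only [Qn]
          by_cases h1 : m / s = (j : ℕ) / s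
          · by_cases h2 : m % s = i' % s
            · simp only [h1, h2, if_true]; ring
            · simp [h1, h2, Ne.symm h2]
          · simp [h1]
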